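/- arXiv:math/0506379 — 2 statements merged into one kernel-verified Lean document; each statement's English description precedes it below -/
import Mathlib

section
/- A family 𝓕 of F_σ subsets of X is 𝒦^ℕ-residual if and only if it is 𝒦↗^ℕ-residual. That is, the set 𝒦_𝓕^ℕ = {(K_n) ∈ 𝒦^ℕ : ⋃_{n=1}^∞ K_n ∈ 𝓕} is residual in 𝒦^ℕ if and only if 𝒦_𝓕^ℕ ∩ 𝒦↗^ℕ is residual in the subspace 𝒦↗^ℕ of increasing sequences. -/
open TopologicalSpace Topology

namespace KRes

/-- A Banach-Mazur style criterion for residuality. -/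
theorem residual_of_positions {Y P : Type*} [TopologicalSpace Y] (W : P → Set Y)
    (hWo : ∀ p, IsOpen (W p)) (R : ℕ → P → P → Prop)
    (root : P) (hroot : W root = Set.univ)
    (move : ∀ n p V, IsOpen V → V.Nonempty → V ⊆ W p →
      ∃ q, R n p q ∧ W q ⊆ V ∧ (W q).Nonempty)
    (hsub : ∀ n p q, R n p q → W q ⊆ W p)
    (S : Set Y)
    (hS : ∀ s : ℕ → P, (∀ n, R n (s n) (s (n+1))) → ∀ y, (∀ n, y ∈ W (s n)) → y ∈ S) :
    S ∈ residual Y := by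
  classical
  have key : ∀ n p, ∃ Q : Set P, (∀ q ∈ Q, R n p q) ∧
      (∀ q ∈ Q, ∀ r ∈ Q, ∀ y, y ∈ W q → y ∈ W r → q = r) ∧
      W p ⊆ closure (⋃ q ∈ Q, W q) := by
    intro n p
    obtain ⟨Q, hQ⟩ := zorn_subset {Q : Set P | (∀ q ∈ Q, R n p q) ∧
      (∀ q ∈ Q, ∀ r ∈ Q, ∀ y, y ∈ W q → y ∈ W r → q = r)} (by
      intro c hc hchain
      refine ⟨⋃₀ c, ⟨?_, ?_⟩, fun s hs => Set.subset_sUnion_of_mem hs⟩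
      · rintro q ⟨s, hs, hq⟩
        exact (hc hs).1 q hq
      · rintro q ⟨s, hs, hq⟩ r ⟨t, ht, hr⟩ y hy hy'
        rcases hchain.total hs ht with h | h
        · exact (hc ht).2 q (h hq) r hr y hy hy'
        · exact (hc hs).2 q hq r (h hr) y hy hy')
    refine ⟨Q, hQ.prop.1, hQ.prop.2, ?_⟩
    intro x hx
    by_contra hcl
    obtain ⟨q, hq, hqV, z, hz⟩ := move n p (W p \ closure (⋃ q ∈ Q, W q))
      ((hWo p).sdiff isClosed_closure) ⟨x, hx, hcl⟩ Set.sdiff_subset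
    have hdis : ∀ r ∈ Q, ∀ y, y ∈ W q → y ∈ W r → False := by
      intro r hr y hy hy'
      exact (hqV hy).2 (subset_closure (Set.mem_biUnion hr hy'))
    have hins : insert q Q ⊆ Q := by
      apply hQ.le_of_ge (y := insert q Q) _ (Set.subset_insert _ _)
      refine ⟨?_, ?_⟩
      · rintro r (rfl | hr)
        · exact hq
        · exact hQ.prop.1 r hr
      · rintro r (rfl | hr) t (rfl | ht) y hy hy'
        · rfl
        · exact (hdis t ht y hy hy').elim
        · exact (hdis r hr y hy' hy).elim
        · exact hQ.prop.2 r hr t ht y hy hy'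
    exact hdis q (hins (Set.mem_insert _ _)) z hz hz
  choose Q hQR hQd hQc using key
  let T : ℕ → Set P := fun n => Nat.rec {root} (fun n T => ⋃ p ∈ T, Q n p) n
  have hT0 : T 0 = {root} := rfl
  have hTs : ∀ n, T (n+1) = ⋃ p ∈ T n, Q n p := fun n => rfl
  let G : ℕ → Set Y := fun n => ⋃ q ∈ T n, W q
  have hGo : ∀ n, IsOpen (G n) := fun n => isOpen_biUnion fun q _ => hWo q
  have hGd : ∀ n, Dense (G n) := by
    intro n
    induction n with
    | zero => simp [G, hT0, hroot]
    | succ n ih =>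
      rw [dense_iff_closure_eq] at ih ⊢
      rw [← Set.univ_subset_iff, ← ih]
      apply closure_minimal _ isClosed_closure
      refine Set.iUnion₂_subset fun p hp => (hQc n p).trans (closure_mono ?_)
      refine Set.iUnion₂_subset fun q hq => ?_
      have : q ∈ T (n+1) := by rw [hTs]; exact Set.mem_biUnion hp hq
      exact Set.subset_biUnion_of_mem (u := W) this
  have hTd : ∀ n, ∀ p ∈ T n, ∀ q ∈ T n, ∀ y, y ∈ W p → y ∈ W q → p = q := by
    intro n
    induction n with
    | zero => intro p hp q hq _ _ _; rw [hT0] at hp hq; exact hp.trans hq.symm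
    | succ n ih =>
      intro p hp q hq y hy hy'
      rw [hTs] at hp hq
      obtain ⟨p', hp', hp⟩ := Set.mem_iUnion₂.1 hp
      obtain ⟨q', hq', hq⟩ := Set.mem_iUnion₂.1 hq
      have := ih p' hp' q' hq' y (hsub _ _ _ (hQR _ _ _ hp) hy) (hsub _ _ _ (hQR _ _ _ hq) hy')
      subst this
      exact hQd _ _ p hp q hq y hy hy'
  have hres : (⋂ n, G n) ∈ residual Y :=
    countable_iInter_mem.2 fun n => residual_of_dense_open (hGo n) (hGd n)
  refine Filter.mem_of_superset hres fun y hy => ?_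
  have hy' : ∀ n, ∃ q, q ∈ T n ∧ y ∈ W q := fun n => by
    simpa [G] using Set.mem_iInter.1 hy n
  choose s hsT hsW using hy'
  refine hS s (fun n => ?_) y hsW
  have h := hsT (n+1)
  rw [hTs] at h
  obtain ⟨p, hp, h⟩ := Set.mem_iUnion₂.1 h
  have hR := hQR _ _ _ h
  have : p = s n := hTd n p hp _ (hsT n) y (hsub _ _ _ hR (hsW _)) (hsW n)
  rwa [this] at hR

open Metric

/-- A joint position. -/
structure Pos (X : Type*) [MetricSpace X] where
  N : ℕ
  M : ℕ
  lab : ℕ → ℕ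
  E : ℕ → Closeds X
  e : ℝ
  e_pos : 0 < e
  lab_lt : ∀ i < N, lab i < M
  disj : ∀ i < N, ∀ j < N, ∀ x, x ∈ thickening e (E i : Set X) →
    x ∈ thickening e (E j : Set X) → i = j

/-- The union of the first `N` sets with label at most `j`. -/
noncomputable def EL {X : Type*} [TopologicalSpace X] (N : ℕ) (lab : ℕ → ℕ) (E : ℕ → Closeds X)
    (j : ℕ) : Closeds X :=
  ((Finset.range N).filter (fun i => lab i ≤ j)).sup E

theorem mem_EL {X : Type*} [TopologicalSpace X] {N : ℕ} {lab : ℕ → ℕ} {E : ℕ → Closeds X}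
    {j : ℕ} {x : X} : x ∈ EL N lab E j ↔ ∃ i < N, lab i ≤ j ∧ x ∈ E i := by
  unfold EL
  rw [← SetLike.mem_coe, Closeds.coe_finset_sup]
  simp [and_assoc]

theorem EL_mono {X : Type*} [TopologicalSpace X] (N : ℕ) (lab : ℕ → ℕ) (E : ℕ → Closeds X) :
    Monotone (EL N lab E) := by
  intro j j' h x hx
  obtain ⟨i, hi, hl, hx⟩ := mem_EL.1 hx
  exact mem_EL.2 ⟨i, hi, hl.trans h, hx⟩

variable {X : Type*} [MetricSpace X]

/-- If corresponding sets are close, so are the unions. -/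
theorem EL_close {N : ℕ} {lab : ℕ → ℕ} {E F : ℕ → Closeds X} {r : ENNReal}
    (h : ∀ i < N, edist (E i) (F i) < r) (j : ℕ) :
    edist (EL N lab E j) (EL N lab F j) ≤ r := by
  rw [Closeds.edist_eq]
  apply hausdorffEDist_le_of_mem_edist
  · intro x hx
    obtain ⟨i, hi, hl, hx⟩ := mem_EL.1 hx
    have h' := h i hi
    rw [Closeds.edist_eq] at h'
    obtain ⟨y, hy, hxy⟩ := exists_edist_lt_of_hausdorffEDist_lt hx h'
    exact ⟨y, mem_EL.2 ⟨i, hi, hl, hy⟩, hxy.le⟩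
  · intro x hx
    obtain ⟨i, hi, hl, hx⟩ := mem_EL.1 hx
    have h' := h i hi
    rw [edist_comm, Closeds.edist_eq] at h'
    obtain ⟨y, hy, hxy⟩ := exists_edist_lt_of_hausdorffEDist_lt hx h'
    exact ⟨y, mem_EL.2 ⟨i, hi, hl, hy⟩, hxy.le⟩

/-- strict version of Hausdorff closeness for compact sets. -/
theorem close_of_subset [CompactSpace X] {A B : Closeds X} {e : ℝ} (he : 0 < e)
    (h1 : (A : Set X) ⊆ thickening e (B : Set X)) (h2 : (B : Set X) ⊆ thickening e (A : Set X)) :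
    edist A B < ENNReal.ofReal e := by
  have aux : ∀ A B : Closeds X, (A : Set X) ⊆ thickening e (B : Set X) →
      ∃ r < ENNReal.ofReal e, ∀ x ∈ (A : Set X), infEDist x B ≤ r := by
    intro A B h
    rcases (A : Set X).eq_empty_or_nonempty with h0 | h0
    · exact ⟨0, by simpa using he, by simp [h0]⟩
    · obtain ⟨x, hx, hmax⟩ := A.isClosed.isCompact.exists_isMaxOn h0
        (continuous_infEDist (s := (B : Set X))).continuousOn
      exact ⟨infEDist x B, h hx, fun y hy => hmax hy⟩
  obtain ⟨r, hr, h1⟩ := aux A B h1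
  obtain ⟨s, hs, h2⟩ := aux B A h2
  refine lt_of_le_of_lt ?_ (max_lt hr hs)
  rw [Closeds.edist_eq]
  exact hausdorffEDist_le_of_infEDist (fun x hx => (h1 x hx).trans (le_max_left _ _))
    (fun x hx => (h2 x hx).trans (le_max_right _ _))

theorem subset_thickening_of_edist {A B : Closeds X} {e : ℝ} (h : edist A B < ENNReal.ofReal e) :
    (A : Set X) ⊆ thickening e (B : Set X) := by
  intro x hx
  rw [Closeds.edist_eq] at h
  rw [mem_thickening_iff_exists_edist_lt]
  exact exists_edist_lt_of_hausdorffEDist_lt hx h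

namespace Pos

/-- Open neighbourhood of the `i`-th set. -/
def U (p : Pos X) (i : ℕ) : Set X := thickening p.e (p.E i : Set X)

noncomputable def L (p : Pos X) (j : ℕ) : Closeds X := EL p.N p.lab p.E j

def WK (p : Pos X) : Set (ℕ → Closeds X) :=
  {K | ∀ i < p.N, edist (K i) (p.E i) < ENNReal.ofReal p.e}

def WL (p : Pos X) : Set {K : ℕ → Closeds X // Monotone K} :=
  {K | ∀ j < p.M, edist (K.1 j) (p.L j) < ENNReal.ofReal p.e}

/-- `q` refines `p`. -/
structure Ref (p q : Pos X) : Prop where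
  hN : p.N ≤ q.N
  hM : p.M ≤ q.M
  hlab : ∀ i < p.N, q.lab i = p.lab i
  k : ∀ i < p.N, closedEBall (q.E i) (ENNReal.ofReal q.e) ⊆ eball (p.E i) (ENNReal.ofReal p.e)
  l : ∀ j < p.M, closedEBall (q.L j) (ENNReal.ofReal q.e) ⊆ eball (p.L j) (ENNReal.ofReal p.e)
  t1 : ∀ i < p.N, q.U i ⊆ p.U i
  t2 : ∀ i, p.N ≤ i → i < q.N → q.lab i < p.M → ∀ x ∈ q.U i,
    ∃ i' < p.N, p.lab i' < q.lab i ∧ x ∈ p.U i'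

theorem Ref.trans {p q r : Pos X} (h1 : Ref p q) (h2 : Ref q r) : Ref p r where
  hN := h1.hN.trans h2.hN
  hM := h1.hM.trans h2.hM
  hlab i hi := (h2.hlab i (hi.trans_le h1.hN)).trans (h1.hlab i hi)
  k i hi := (h2.k i (hi.trans_le h1.hN)).trans (eball_subset_closedEBall.trans (h1.k i hi))
  l i hi := (h2.l i (hi.trans_le h1.hM)).trans (eball_subset_closedEBall.trans (h1.l i hi))
  t1 i hi := (h2.t1 i (hi.trans_le h1.hN)).trans (h1.t1 i hi)
  t2 i hi hi' hl x hx := by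
    by_cases hiq : i < q.N
    · have e := h2.hlab i hiq
      rw [e] at hl ⊢
      exact h1.t2 i hi hiq hl x (h2.t1 i hiq hx)
    · obtain ⟨i', hi'q, hlt, hx⟩ := h2.t2 i (not_lt.1 hiq) hi' (hl.trans_le h1.hM) x hx
      by_cases hp : i' < p.N
      · exact ⟨i', hp, by rwa [← h1.hlab i' hp], h1.t1 i' hp hx⟩
      · obtain ⟨i'', a, b, c⟩ := h1.t2 i' (not_lt.1 hp) hi'q (hlt.trans hl) x hx
        exact ⟨i'', a, b.trans hlt, c⟩

theorem isOpen_WK (p : Pos X) : IsOpen p.WK := by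
  have : p.WK = ⋂ i ∈ Finset.range p.N, (fun K : ℕ → Closeds X => K i) ⁻¹'
      eball (p.E i) (ENNReal.ofReal p.e) := by
    ext K; simp [WK]
  rw [this]
  exact isOpen_biInter_finset fun i _ => isOpen_eball.preimage (continuous_apply i)

theorem isOpen_WL (p : Pos X) : IsOpen p.WL := by
  have : p.WL = ⋂ i ∈ Finset.range p.M,
      (fun K : {K : ℕ → Closeds X // Monotone K} => K.1 i) ⁻¹'
      eball (p.L i) (ENNReal.ofReal p.e) := by
    ext K; simp [WL]
  rw [this]
  exact isOpen_biInter_finset fun i _ => isOpen_eball.preimage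
    ((continuous_apply i).comp continuous_subtype_val)

theorem WK_nonempty (p : Pos X) : p.WK.Nonempty :=
  ⟨p.E, fun i _ => by simpa using p.e_pos⟩

theorem WL_nonempty (p : Pos X) : p.WL.Nonempty :=
  ⟨⟨p.L, EL_mono _ _ _⟩, fun i _ => by simpa using p.e_pos⟩

theorem Ref.closure_WK {p q : Pos X} (h : Ref p q) : closure q.WK ⊆ p.WK := by
  have : IsClosed {K : ℕ → Closeds X | ∀ i < q.N, edist (K i) (q.E i) ≤ ENNReal.ofReal q.e} := by
    simp only [Set.ofPred_forall]
    refine isClosed_iInter fun i => isClosed_iInter fun _ => ?_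
    exact isClosed_closedEBall.preimage (continuous_apply (A := fun _ : ℕ => Closeds X) i)
  refine (closure_minimal (fun K hK i hi => (hK i hi).le) this).trans ?_
  intro K hK i hi
  exact h.k i hi (hK i (hi.trans_le h.hN))

theorem Ref.closure_WL {p q : Pos X} (h : Ref p q) : closure q.WL ⊆ p.WL := by
  have : IsClosed {K : {K : ℕ → Closeds X // Monotone K} |
      ∀ i < q.M, edist (K.1 i) (q.L i) ≤ ENNReal.ofReal q.e} := by
    simp only [Set.ofPred_forall]
    refine isClosed_iInter fun i => isClosed_iInter fun _ => ?_
    exact isClosed_closedEBall.preimage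
      ((continuous_apply (A := fun _ : ℕ => Closeds X) i).comp continuous_subtype_val)
  refine (closure_minimal (fun K hK i hi => (hK i hi).le) this).trans ?_
  intro K hK i hi
  exact h.l i hi (hK i (hi.trans_le h.hM))

end Pos

theorem compact_mono [CompactSpace X] : CompactSpace {K : ℕ → Closeds X // Monotone K} := by
  apply isCompact_iff_compactSpace.1
  apply IsClosed.isCompact
  have : {K : ℕ → Closeds X | Monotone K} = ⋂ i, ⋂ j, ⋂ (_ : i ≤ j), {K | K i ⊔ K j = K j} := by
    ext K; simp [Monotone]
  change IsClosed {K : ℕ → Closeds X | Monotone K}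
  rw [this]
  refine isClosed_iInter fun i => isClosed_iInter fun j => isClosed_iInter fun _ => ?_
  exact isClosed_eq ((continuous_apply i).sup (continuous_apply j)) (continuous_apply j)

theorem exists_chain {Y : Type*} [TopologicalSpace Y] [CompactSpace Y] (W : ℕ → Set Y)
    (hne : ∀ n, (W n).Nonempty) (h : ∀ n, closure (W (n+1)) ⊆ W n) : ∃ y, ∀ n, y ∈ W n := by
  obtain ⟨y, hy⟩ := IsCompact.nonempty_iInter_of_sequence_nonempty_isCompact_isClosed
    (fun n => closure (W n)) (fun n => (h n).trans subset_closure) (fun n => (hne n).closure)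
    isClosed_closure.isCompact (fun n => isClosed_closure)
  exact ⟨y, fun n => h n (Set.mem_iInter.1 hy (n+1))⟩

/-- If `A` and `B` are both close to a sequence of sets then `A ⊆ B`. -/
theorem mem_of_approx {x : X} {B : Closeds X} (e : ℕ → ℝ)
    (he : Filter.Tendsto e Filter.atTop (𝓝 0)) (n₀ : ℕ) (E : ℕ → Set X)
    (h1 : ∀ n ≥ n₀, x ∈ thickening (e n) (E n)) (h2 : ∀ n ≥ n₀, E n ⊆ thickening (e n) (B : Set X)) :
    x ∈ B := by
  rw [← SetLike.mem_coe, ← B.isClosed.closure_eq, Metric.mem_closure_iff]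
  intro r hr
  have : ∀ᶠ n in Filter.atTop, e n < r / 2 := he.eventually (gt_mem_nhds (by linarith))
  obtain ⟨n, hn, hn'⟩ := (this.and (Filter.eventually_ge_atTop n₀)).exists
  obtain ⟨y, hy, hxy⟩ := mem_thickening_iff.1 (h1 n hn')
  obtain ⟨z, hz, hyz⟩ := mem_thickening_iff.1 (h2 n hn' hy)
  exact ⟨z, hz, (dist_triangle x y z).trans_lt (by linarith)⟩

theorem iUnion_eq (p : ℕ → Pos X) (href : ∀ n, Pos.Ref (p n) (p (n+1)))
    (he : Filter.Tendsto (fun n => (p n).e) Filter.atTop (𝓝 0))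
    (hN : ∀ n, n ≤ (p (n+1)).N) (hM : ∀ n, n ≤ (p (n+1)).M)
    (K : ℕ → Closeds X) (L : {K : ℕ → Closeds X // Monotone K})
    (hK : ∀ n, K ∈ (p n).WK) (hL : ∀ n, L ∈ (p n).WL) :
    (⋃ n, (K n : Set X)) = ⋃ n, (L.1 n : Set X) := by
  have hNle : ∀ i n, i + 2 ≤ n → i < (p n).N := by
    intro i n h
    obtain ⟨m, rfl⟩ : ∃ m, n = m + 1 := ⟨n - 1, by omega⟩
    exact lt_of_lt_of_le (by omega) (hN m)
  have hMle : ∀ i n, i + 2 ≤ n → i < (p n).M := by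
    intro i n h
    obtain ⟨m, rfl⟩ : ∃ m, n = m + 1 := ⟨n - 1, by omega⟩
    exact lt_of_lt_of_le (by omega) (hM m)
  apply Set.Subset.antisymm
  · refine Set.iUnion_subset fun i x hx => ?_
    have hlab : ∀ n ≥ i + 2, (p n).lab i = (p (i+2)).lab i := by
      intro n hn
      induction n, hn using Nat.le_induction with
      | base => rfl
      | succ n hn ih => rw [(href n).hlab i (hNle i n hn), ih]
    set j := (p (i+2)).lab i with hj
    refine Set.mem_iUnion.2 ⟨j, ?_⟩
    refine mem_of_approx (fun n => (p n).e) he (i + j + 2) (fun n => ((p n).E i : Set X))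
      (fun n hn => subset_thickening_of_edist (hK n i (hNle i n (by omega))) hx) ?_
    intro n hn y hy
    have h := hL n j (hMle j n (by omega))
    rw [edist_comm] at h
    apply subset_thickening_of_edist h
    exact mem_EL.2 ⟨i, hNle i n (by omega), (hlab n (by omega)).le, hy⟩
  · refine Set.iUnion_subset fun j x hx => ?_
    have hex : ∀ n, ∃ i, j + 2 ≤ n → i < (p n).N ∧ (p n).lab i ≤ j ∧ x ∈ (p n).U i := by
      intro n
      by_cases hn : j + 2 ≤ n
      · have h := subset_thickening_of_edist (hL n j (hMle j n hn)) hx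
        obtain ⟨z, hz, hxz⟩ := mem_thickening_iff.1 h
        obtain ⟨i, hi, hl, hz⟩ := mem_EL.1 hz
        exact ⟨i, fun _ => ⟨hi, hl, mem_thickening_iff.2 ⟨z, hz, hxz⟩⟩⟩
      · exact ⟨0, fun h => (hn h).elim⟩
    choose ι hι using hex
    have hstep : ∀ n, j + 2 ≤ n → ι (n+1) = ι n ∨
        (p n).lab (ι n) < (p (n+1)).lab (ι (n+1)) := by
      intro n hn
      obtain ⟨a, b, c⟩ := hι n hn
      obtain ⟨a', b', c'⟩ := hι (n+1) (by omega)
      by_cases h : ι (n+1) < (p n).N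
      · left
        exact (p n).disj _ h _ a x ((href n).t1 _ h c') c
      · right
        obtain ⟨i, hi, hl, hxi⟩ := (href n).t2 _ (not_lt.1 h) a' (b'.trans_lt (hMle j n hn)) x c'
        have := (p n).disj _ hi _ a x hxi c
        rwa [← this]
    let f : ℕ → ℕ := fun n => (p (n + (j+2))).lab (ι (n + (j+2)))
    have hf : ∀ n, f n ≤ j := fun n => (hι (n + (j+2)) (by omega)).2.1
    obtain ⟨n, hn⟩ : ∃ n, ∀ m, f m ≤ f n := by
      have hfin : (Set.range f).Finite :=
        (Set.finite_Iic j).subset (by rintro _ ⟨n, rfl⟩; exact hf n)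
      obtain ⟨_, ⟨n, rfl⟩, hn⟩ := hfin.exists_maximal (Set.range_nonempty f)
      exact ⟨n, fun m => by
        rcases le_total (f m) (f n) with h | h
        · exact h
        · exact hn ⟨m, rfl⟩ h⟩
    have hconst : ∀ m ≥ n, ι (m + (j+2)) = ι (n + (j+2)) ∧ f m = f n := by
      intro m hm
      induction m, hm using Nat.le_induction with
      | base => exact ⟨rfl, rfl⟩
      | succ m hm ih =>
        have e : m + 1 + (j+2) = m + (j+2) + 1 := by omega
        have hs := hstep (m + (j+2)) (by omega)
        have hmax := hn (m+1)
        simp only [f] at hmax ih ⊢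
        rw [e] at hmax ⊢
        rcases hs with h | h
        · refine ⟨h.trans ih.1, ?_⟩
          rw [h, (href _).hlab _ (hι _ (by omega)).1, ih.2]
        · omega
    refine Set.mem_iUnion.2 ⟨ι (n + (j+2)), ?_⟩
    have hU : ∀ m ≥ n + (j+2), ι (n + (j+2)) < (p m).N ∧ x ∈ (p m).U (ι (n + (j+2))) := by
      intro m hm
      have h := hconst (m - (j+2)) (by omega)
      rw [show m - (j+2) + (j+2) = m by omega] at h
      rw [← h.1]
      have := hι m (by omega)
      exact ⟨this.1, this.2.2⟩
    refine mem_of_approx (fun n => (p n).e) he (n + (j+2)) (fun m => ((p m).E (ι (n + (j+2))) : Set X))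
      (fun m hm => (hU m hm).2) ?_
    intro m hm
    have h := hK m _ (hU m hm).1
    rw [edist_comm] at h
    exact subset_thickening_of_edist h


/-- A finite set close to `A` and avoiding a given finite set. -/
theorem exists_finite_close [CompactSpace X] (hdense : ∀ x : X, Filter.NeBot (𝓝[≠] x))
    (A : Closeds X) (T : Set X) (hT : T.Finite) {d : ℝ} (hd : 0 < d) :
    ∃ E : Closeds X, (E : Set X).Finite ∧ Disjoint (E : Set X) T ∧
      edist E A < ENNReal.ofReal d := by
  have := hdense
  obtain ⟨F, hFA, hF, hcov⟩ := A.isClosed.isCompact.finite_cover_balls (e := d / 2) (by linarith)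
  have hT' : Dense Tᶜ := by
    have := (dense_univ (X := X)).sdiff_finite hT
    rwa [← Set.compl_eq_univ_sdiff] at this
  have hex : ∀ x : X, ∃ y ∈ Tᶜ, dist x y < d / 2 := fun x => hT'.exists_dist_lt x (by linarith)
  choose g hgT hg using hex
  refine ⟨⟨g '' F, (hF.image g).isClosed⟩, hF.image g, ?_, ?_⟩
  · rw [Set.disjoint_left]
    rintro _ ⟨x, _, rfl⟩
    exact hgT x
  · apply close_of_subset hd
    · rintro _ ⟨x, hx, rfl⟩
      exact mem_thickening_iff.2 ⟨x, hFA hx, by rw [dist_comm]; linarith [hg x]⟩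
    · intro x hx
      obtain ⟨y, hy, hxy⟩ := Set.mem_iUnion₂.1 (hcov hx)
      refine mem_thickening_iff.2 ⟨g y, ⟨y, hy, rfl⟩, ?_⟩
      have := dist_triangle x y (g y)
      rw [mem_ball] at hxy
      linarith [hg y]

theorem exists_disjoint_close [CompactSpace X] (hdense : ∀ x : X, Filter.NeBot (𝓝[≠] x))
    (A : ℕ → Closeds X) {d : ℝ} (hd : 0 < d) (N : ℕ) :
    ∃ E : ℕ → Closeds X, (∀ i < N, (E i : Set X).Finite) ∧
      (∀ i < N, ∀ j < N, i ≠ j → Disjoint (E i : Set X) (E j)) ∧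
      ∀ i < N, edist (E i) (A i) < ENNReal.ofReal d := by
  induction N with
  | zero => exact ⟨A, by simp, by simp, by simp⟩
  | succ N ih =>
    obtain ⟨E, hf, hdis, hcl⟩ := ih
    obtain ⟨B, hBf, hBd, hBc⟩ := exists_finite_close hdense (A N)
      (⋃ i ∈ Finset.range N, (E i : Set X))
      (Set.Finite.biUnion (Finset.finite_toSet _) (fun i hi => hf i (by simpa using hi))) hd
    have hBd' : ∀ i < N, Disjoint (B : Set X) (E i) := fun i hi =>
      hBd.mono_right (Set.subset_biUnion_of_mem (u := fun i => (E i : Set X)) (by simpa using hi))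
    have hlt : ∀ i, i < N + 1 → i ≠ N → i < N := by intros; omega
    refine ⟨Function.update E N B, ?_, ?_, ?_⟩
    · intro i hi
      by_cases h : i = N
      · subst h; simpa using hBf
      · simpa [h] using hf i (hlt i hi h)
    · intro i hi j hj hij
      by_cases h : i = N
      · subst h
        have : j ≠ i := hij.symm
        simpa [this] using hBd' j (hlt j hj this)
      · by_cases h' : j = N
        · subst h'
          simpa [h] using (hBd' i (hlt i hi h)).symm
        · simpa [h, h'] using hdis i (hlt i hi h) j (hlt j hj h') hij
    · intro i hi
      by_cases h : i = N
      · subst h; simpa using hBc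
      · simpa [h] using hcl i (hlt i hi h)

theorem exists_thick_disjoint [CompactSpace X] (E : ℕ → Closeds X) (N : ℕ)
    (h : ∀ i < N, ∀ j < N, i ≠ j → Disjoint (E i : Set X) (E j)) :
    ∀ᶠ e in 𝓝[>] (0:ℝ), ∀ i < N, ∀ j < N, ∀ x, x ∈ thickening e (E i : Set X) →
    x ∈ thickening e (E j : Set X) → i = j := by
  have : ∀ᶠ e in 𝓝[>] (0:ℝ), ∀ i ∈ Finset.range N, ∀ j ∈ Finset.range N,
      ∀ x, x ∈ thickening e (E i : Set X) → x ∈ thickening e (E j : Set X) → i = j := by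
    rw [Filter.eventually_all_finset]
    intro i hi
    rw [Filter.eventually_all_finset]
    intro j hj
    by_cases hij : i = j
    · exact Filter.Eventually.of_forall fun _ _ _ _ => hij
    · obtain ⟨d, hd, hdis⟩ := (h i (by simpa using hi) j (by simpa using hj) hij).exists_thickenings
        (E i).isClosed.isCompact (E j).isClosed
      filter_upwards [Ioo_mem_nhdsGT hd] with e he x hx hx'
      exact (Set.disjoint_left.1 hdis (thickening_mono he.2.le _ hx)
        (thickening_mono he.2.le _ hx')).elim
  filter_upwards [this] with e he i hi j hj
  exact he i (by simpa using hi) j (by simpa using hj)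

theorem eventually_add_lt {a : ENNReal} {e : ℝ} (h : a < ENNReal.ofReal e) :
    ∀ᶠ η in 𝓝[>] (0:ℝ), a + ENNReal.ofReal (2 * η) < ENNReal.ofReal e := by
  have h1 : Filter.Tendsto (fun η : ℝ => a + ENNReal.ofReal (2 * η)) (𝓝 0) (𝓝 a) := by
    have h2 : Filter.Tendsto (fun η : ℝ => ENNReal.ofReal (2 * η)) (𝓝 0) (𝓝 0) := by
      have : Continuous (fun η : ℝ => ENNReal.ofReal (2 * η)) :=
        ENNReal.continuous_ofReal.comp (continuous_const.mul continuous_id)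
      simpa using this.tendsto 0
    simpa using (tendsto_const_nhds (x := a)).add h2
  exact (h1.mono_left nhdsWithin_le_nhds).eventually_lt_const h

theorem eventually_thickening_subset [CompactSpace X] (A : Closeds X) {V : Set X} (hV : IsOpen V)
    (h : (A : Set X) ⊆ V) : ∀ᶠ η in 𝓝[>] (0:ℝ), thickening (2 * η) (A : Set X) ⊆ V := by
  obtain ⟨d, hd, hdV⟩ := A.isClosed.isCompact.exists_thickening_subset_open hV h
  filter_upwards [Ioo_mem_nhdsGT (half_pos hd)] with η hη
  exact (thickening_mono (by linarith [hη.2]) _).trans hdV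

theorem two_mul_ofReal {η : ℝ} : ENNReal.ofReal (2 * η) = ENNReal.ofReal η + ENNReal.ofReal η := by
  rw [ENNReal.ofReal_mul (by norm_num)]
  simp [two_mul]

/-- The general refinement lemma. -/
theorem exists_ref [CompactSpace X] (hdense : ∀ x : X, Filter.NeBot (𝓝[≠] x))
    (p : Pos X) (N M : ℕ) (hN : p.N ≤ N) (hM : p.M ≤ M) (lab : ℕ → ℕ)
    (hlab : ∀ i < p.N, lab i = p.lab i) (hlt : ∀ i < N, lab i < M) (A : ℕ → Closeds X)
    (h1 : ∀ i < p.N, edist (A i) (p.E i) < ENNReal.ofReal p.e)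
    (h2 : ∀ i, p.N ≤ i → i < N → lab i < p.M → ∀ x ∈ A i,
      ∃ i' < p.N, p.lab i' < lab i ∧ x ∈ p.U i')
    (h3 : ∀ j < p.M, edist (EL N lab A j) (p.L j) < ENNReal.ofReal p.e)
    {d : ℝ} (hd : 0 < d) :
    ∃ q : Pos X, Pos.Ref p q ∧ q.N = N ∧ q.M = M ∧ q.lab = lab ∧ q.e ≤ d ∧
      (∀ i < N, closedEBall (q.E i) (ENNReal.ofReal q.e) ⊆ closedEBall (A i) (ENNReal.ofReal d)) ∧
      ∀ j, closedEBall (q.L j) (ENNReal.ofReal q.e) ⊆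
        closedEBall (EL N lab A j) (ENNReal.ofReal d) := by
  have e1 : ∀ᶠ η in 𝓝[>] (0:ℝ), ∀ i ∈ Finset.range p.N,
      edist (A i) (p.E i) + ENNReal.ofReal (2 * η) < ENNReal.ofReal p.e :=
    (Filter.eventually_all_finset _).2 fun i hi => eventually_add_lt (h1 i (by simpa using hi))
  have e3 : ∀ᶠ η in 𝓝[>] (0:ℝ), ∀ j ∈ Finset.range p.M,
      edist (EL N lab A j) (p.L j) + ENNReal.ofReal (2 * η) < ENNReal.ofReal p.e :=
    (Filter.eventually_all_finset _).2 fun i hi => eventually_add_lt (h3 i (by simpa using hi))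
  have e1' : ∀ᶠ η in 𝓝[>] (0:ℝ), ∀ i ∈ Finset.range p.N,
      thickening (2 * η) (A i : Set X) ⊆ p.U i :=
    (Filter.eventually_all_finset _).2 fun i hi => eventually_thickening_subset _
      isOpen_thickening (subset_thickening_of_edist (h1 i (by simpa using hi)))
  have e2 : ∀ᶠ η in 𝓝[>] (0:ℝ), ∀ i ∈ Finset.range N, p.N ≤ i → lab i < p.M →
      thickening (2 * η) (A i : Set X) ⊆ {x | ∃ i' < p.N, p.lab i' < lab i ∧ x ∈ p.U i'} := by
    refine (Filter.eventually_all_finset _).2 fun i hi => ?_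
    by_cases h : p.N ≤ i ∧ lab i < p.M
    · have := eventually_thickening_subset (A i)
        (V := {x | ∃ i' < p.N, p.lab i' < lab i ∧ x ∈ p.U i'}) (by
          have : {x | ∃ i' < p.N, p.lab i' < lab i ∧ x ∈ p.U i'} =
            ⋃ i', ⋃ (_ : i' < p.N), ⋃ (_ : p.lab i' < lab i), p.U i' := by
              ext x; simp [and_left_comm]
          rw [this]
          exact isOpen_iUnion fun _ => isOpen_iUnion fun _ => isOpen_iUnion fun _ =>
            isOpen_thickening)
        (fun x hx => h2 i h.1 (by simpa using hi) h.2 x hx)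
      filter_upwards [this] with η hη _ _ using hη
    · exact Filter.Eventually.of_forall fun η a b => (h ⟨a, b⟩).elim
  obtain ⟨η, e1, e3, e1', e2, hη0, hηd⟩ := (e1.and (e3.and (e1'.and (e2.and
    (Ioo_mem_nhdsGT (half_pos hd)))))).exists
  obtain ⟨E, -, hdis, hcl⟩ := exists_disjoint_close hdense A hη0 N
  obtain ⟨e, hedis, he0, heη⟩ := ((exists_thick_disjoint E N hdis).and (Ioo_mem_nhdsGT hη0)).exists
  let q : Pos X := ⟨N, M, lab, E, e, he0, hlt, hedis⟩
  have hη2 : ENNReal.ofReal e + ENNReal.ofReal η ≤ ENNReal.ofReal (2 * η) := by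
    rw [two_mul_ofReal]; gcongr
  have hEK : ∀ i < N, ∀ K, edist K (E i) ≤ ENNReal.ofReal e →
      edist K (A i) ≤ ENNReal.ofReal (2 * η) := fun i hi K hK =>
    (edist_triangle _ _ _).trans ((add_le_add hK (hcl i hi).le).trans hη2)
  have hEL : ∀ j, ∀ K, edist K (q.L j) ≤ ENNReal.ofReal e →
      edist K (EL N lab A j) ≤ ENNReal.ofReal (2 * η) := fun j K hK =>
    (edist_triangle _ _ _).trans ((add_le_add hK (EL_close hcl j)).trans hη2)
  have hU : ∀ i < N, q.U i ⊆ thickening (2 * η) (A i : Set X) := by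
    intro i hi x hx
    obtain ⟨y, hy, hxy⟩ := mem_thickening_iff.1 hx
    obtain ⟨z, hz, hyz⟩ := mem_thickening_iff.1 (subset_thickening_of_edist (hcl i hi) hy)
    refine mem_thickening_iff.2 ⟨z, hz, ?_⟩
    have := dist_triangle x y z
    have : q.e = e := rfl
    linarith
  have hle : ENNReal.ofReal (2 * η) ≤ ENNReal.ofReal d := ENNReal.ofReal_le_ofReal (by linarith)
  refine ⟨q, ⟨hN, hM, hlab, ?_, ?_, ?_, ?_⟩, rfl, rfl, rfl, ?_, ?_, ?_⟩
  · intro i hi K hK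
    refine (edist_triangle K (A i) _).trans_lt (lt_of_le_of_lt ?_ (e1 i (by simpa using hi)))
    rw [add_comm]
    gcongr
    exact hEK i (hi.trans_le hN) K hK
  · intro j hj K hK
    refine (edist_triangle K (EL N lab A j) _).trans_lt
      (lt_of_le_of_lt ?_ (e3 j (by simpa using hj)))
    rw [add_comm]
    gcongr
    exact hEL j K hK
  · intro i hi
    exact (hU i (hi.trans_le hN)).trans (e1' i (by simpa using hi))
  · intro i hi hi' hl x hx
    exact e2 i (by simpa using hi') hi hl (hU i hi' hx)
  · change e ≤ d
    linarith
  · intro i hi K hK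
    exact (hEK i hi K hK).trans hle
  · intro j K hK
    exact (hEL j K hK).trans hle

/-- Basic neighbourhoods in the sequence space. -/
theorem exists_basic {V : Set (ℕ → Closeds X)} (hV : IsOpen V) {K : ℕ → Closeds X} (hK : K ∈ V) :
    ∃ n : ℕ, ∃ d > (0:ℝ), ∀ K' : ℕ → Closeds X,
      (∀ i < n, edist (K' i) (K i) ≤ ENNReal.ofReal d) → K' ∈ V := by
  obtain ⟨I, u, hu, hsub⟩ := isOpen_pi_iff.1 hV K hK
  have : ∀ᶠ η in 𝓝[>] (0:ℝ), ∀ i ∈ I, closedEBall (K i) (ENNReal.ofReal η) ⊆ u i := by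
    refine (Filter.eventually_all_finset _).2 fun i hi => ?_
    obtain ⟨r, hr, hru⟩ := EMetric.isOpen_iff.1 (hu i hi).1 (K i) (hu i hi).2
    have : Filter.Tendsto (fun η : ℝ => ENNReal.ofReal η) (𝓝[>] 0) (𝓝 0) := by
      have := ENNReal.continuous_ofReal.tendsto 0
      rw [ENNReal.ofReal_zero] at this
      exact this.mono_left nhdsWithin_le_nhds
    filter_upwards [this.eventually_lt_const hr] with η hη
    intro L hL
    exact hru (lt_of_le_of_lt hL hη)
  obtain ⟨d, hd, hd0⟩ := (this.and self_mem_nhdsWithin).exists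
  refine ⟨I.sup id + 1, d, hd0, fun K' h => hsub fun i hi => hd i hi (h i ?_)⟩
  exact Nat.lt_succ_of_le (Finset.le_sup (f := id) hi)

theorem moveK [CompactSpace X] (hdense : ∀ x : X, Filter.NeBot (𝓝[≠] x))
    (p : Pos X) (V : Set (ℕ → Closeds X)) (hV : IsOpen V) (hne : V.Nonempty) (hVp : V ⊆ p.WK)
    (n : ℕ) (r : ℝ) (hr : 0 < r) :
    ∃ q, Pos.Ref p q ∧ q.WK ⊆ V ∧ q.e ≤ r ∧ n ≤ q.N ∧ n ≤ q.M := by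
  obtain ⟨K, hK⟩ := hne
  obtain ⟨m, d, hd, hmV⟩ := exists_basic hV hK
  have hKp := hVp hK
  let lab : ℕ → ℕ := fun i => if i < p.N then p.lab i else p.M
  obtain ⟨q, hq, hqN, hqM, -, hqe, hqk, -⟩ := exists_ref hdense p (p.N + m + n) (p.M + n + 1) (by omega) (by omega)
    lab (fun i hi => by simp [lab, hi]) (fun i _ => by
      by_cases hi : i < p.N
      · have := p.lab_lt i hi
        simp only [lab, hi, if_true]; omega
      · simp only [lab, hi, if_false]; omega) K hKp
    (fun i hi _ hl => by simp [lab, not_lt.2 hi] at hl)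
    (fun j hj => by
      have : EL (p.N + m + n) lab K j = EL p.N p.lab K j := by
        ext x
        rw [SetLike.mem_coe, SetLike.mem_coe, mem_EL, mem_EL]
        constructor
        · rintro ⟨i, _, hl, hx⟩
          by_cases hi : i < p.N
          · exact ⟨i, hi, by simpa [lab, hi] using hl, hx⟩
          · simp only [lab, hi, if_false] at hl; omega
        · rintro ⟨i, hi, hl, hx⟩
          exact ⟨i, by omega, by simpa [lab, hi] using hl, hx⟩
      rw [this]
      apply close_of_subset p.e_pos
      · intro x hx
        obtain ⟨i, hi, hl, hx⟩ := mem_EL.1 hx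
        obtain ⟨y, hy, hxy⟩ := mem_thickening_iff.1 (subset_thickening_of_edist (hKp i hi) hx)
        exact mem_thickening_iff.2 ⟨y, mem_EL.2 ⟨i, hi, hl, hy⟩, hxy⟩
      · intro x hx
        obtain ⟨i, hi, hl, hx⟩ := mem_EL.1 hx
        have h := hKp i hi
        rw [edist_comm] at h
        obtain ⟨y, hy, hxy⟩ := mem_thickening_iff.1 (subset_thickening_of_edist h hx)
        exact mem_thickening_iff.2 ⟨y, mem_EL.2 ⟨i, hi, hl, hy⟩, hxy⟩)
    (lt_min hd hr)
  refine ⟨q, hq, ?_, hqe.trans (min_le_right _ _), by omega, by omega⟩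
  intro K' hK'
  apply hmV
  intro i hi
  exact (hqk i (by omega) (hK' i (by omega)).le).trans
    (ENNReal.ofReal_le_ofReal (min_le_left _ _))

theorem moveL [CompactSpace X] (hdense : ∀ x : X, Filter.NeBot (𝓝[≠] x))
    (p : Pos X) (V : Set {K : ℕ → Closeds X // Monotone K}) (hV : IsOpen V) (hne : V.Nonempty)
    (hVp : V ⊆ p.WL) (n : ℕ) (r : ℝ) (hr : 0 < r) :
    ∃ q, Pos.Ref p q ∧ q.WL ⊆ V ∧ q.e ≤ r ∧ n ≤ q.N ∧ n ≤ q.M := by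
  obtain ⟨L, hL⟩ := hne
  obtain ⟨V', hV', rfl⟩ := isOpen_induced_iff.1 hV
  obtain ⟨m, d, hd, hmV⟩ := exists_basic hV' hL
  have hLp := hVp hL
  let lab : ℕ → ℕ := fun i => if i < p.N then p.lab i else i - p.N
  let A : ℕ → Closeds X := fun i => if i < p.N
    then ⟨(L.1 (p.lab i) : Set X) \ ⋃ i', ⋃ (_ : i' < p.N ∧ i' ≠ i), p.U i',
      (L.1 (p.lab i)).isClosed.sdiff (isOpen_iUnion fun _ => isOpen_iUnion fun _ =>
        isOpen_thickening)⟩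
    else ⟨(L.1 (i - p.N) : Set X) \ ⋃ i', ⋃ (_ : i' < p.N ∧ p.lab i' = i - p.N), p.U i',
      (L.1 (i - p.N)).isClosed.sdiff (isOpen_iUnion fun _ => isOpen_iUnion fun _ =>
        isOpen_thickening)⟩
  have hA1 : ∀ i, i < p.N → ∀ x, x ∈ A i ↔
      x ∈ L.1 (p.lab i) ∧ ∀ i' < p.N, i' ≠ i → x ∉ p.U i' := by
    intro i hi x
    simp only [A, hi, if_true]
    rw [← SetLike.mem_coe]
    simp
  have hA2 : ∀ i, p.N ≤ i → ∀ x, x ∈ A i ↔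
      x ∈ L.1 (i - p.N) ∧ ∀ i' < p.N, p.lab i' = i - p.N → x ∉ p.U i' := by
    intro i hi x
    simp only [A, not_lt.2 hi, if_false]
    rw [← SetLike.mem_coe]
    simp
  have hlab1 : ∀ i < p.N, lab i = p.lab i := fun i hi => by simp [lab, hi]
  have hlab2 : ∀ i, p.N ≤ i → lab i = i - p.N := fun i hi => by simp [lab, not_lt.2 hi]
  -- points of `L j` lie in some `U`
  have hcov : ∀ j < p.M, ∀ x ∈ L.1 j, ∃ i < p.N, p.lab i ≤ j ∧ x ∈ p.U i := by
    intro j hj x hx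
    obtain ⟨y, hy, hxy⟩ := mem_thickening_iff.1 (subset_thickening_of_edist (hLp j hj) hx)
    obtain ⟨i, hi, hl, hy⟩ := mem_EL.1 hy
    exact ⟨i, hi, hl, mem_thickening_iff.2 ⟨y, hy, hxy⟩⟩
  have hAU : ∀ i < p.N, ∀ x, x ∈ A i ↔ x ∈ L.1 (p.lab i) ∧ x ∈ p.U i := by
    intro i hi x
    rw [hA1 i hi]
    constructor
    · rintro ⟨hx, h⟩
      refine ⟨hx, ?_⟩
      obtain ⟨i', hi', _, hx'⟩ := hcov _ (p.lab_lt i hi) x hx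
      by_cases e : i' = i
      · rwa [← e]
      · exact (h i' hi' e hx').elim
    · rintro ⟨hx, h⟩
      exact ⟨hx, fun i' hi' hne hx' => hne (p.disj _ hi' _ hi x hx' h)⟩
  have hEL : ∀ j < p.M + m + n + 1, EL (p.N + (p.M + m + n + 1)) lab A j = L.1 j := by
    intro j hj
    ext x
    rw [SetLike.mem_coe, SetLike.mem_coe, mem_EL]
    constructor
    · rintro ⟨i, hi, hl, hx⟩
      by_cases h : i < p.N
      · rw [hlab1 i h] at hl
        exact L.2 hl ((hA1 i h x).1 hx).1
      · rw [hlab2 i (not_lt.1 h)] at hl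
        exact L.2 hl ((hA2 i (not_lt.1 h) x).1 hx).1
    · intro hx
      by_cases h : ∃ i < p.N, p.lab i = j ∧ x ∈ p.U i
      · obtain ⟨i, hi, rfl, hxU⟩ := h
        exact ⟨i, by omega, (hlab1 i hi).le, (hAU i hi x).2 ⟨hx, hxU⟩⟩
      · refine ⟨p.N + j, by omega, by rw [hlab2 _ (by omega)]; omega, ?_⟩
        rw [hA2 _ (by omega), Nat.add_sub_cancel_left]
        exact ⟨hx, fun i hi hl hxU => h ⟨i, hi, hl, hxU⟩⟩
  obtain ⟨q, hq, hqN, hqM, -, hqe, -, hql⟩ := exists_ref hdense p (p.N + (p.M + m + n + 1))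
    (p.M + m + n + 1) (by omega) (by omega)
    lab hlab1 (fun i hi => by
      by_cases h : i < p.N
      · have := p.lab_lt i h
        rw [hlab1 i h]; omega
      · rw [hlab2 i (not_lt.1 h)]; omega) A
    (fun i hi => by
      apply close_of_subset p.e_pos
      · intro x hx
        exact ((hAU i hi x).1 hx).2
      · intro x hx
        have h := hLp _ (p.lab_lt i hi)
        rw [edist_comm] at h
        obtain ⟨y, hy, hxy⟩ := mem_thickening_iff.1 (subset_thickening_of_edist h
          (mem_EL.2 ⟨i, hi, le_rfl, hx⟩))
        refine mem_thickening_iff.2 ⟨y, (hAU i hi y).2 ⟨hy, ?_⟩, hxy⟩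
        exact mem_thickening_iff.2 ⟨x, hx, by rwa [dist_comm]⟩)
    (fun i hi _ hl x hx => by
      rw [hlab2 i hi] at hl ⊢
      obtain ⟨hxL, h⟩ := (hA2 i hi x).1 hx
      obtain ⟨i', hi', hl', hxU⟩ := hcov _ hl x hxL
      exact ⟨i', hi', lt_of_le_of_ne hl' fun e => h i' hi' e hxU, hxU⟩)
    (fun j hj => by
      rw [hEL j (by omega)]
      exact hLp j hj)
    (lt_min hd hr)
  refine ⟨q, hq, ?_, hqe.trans (min_le_right _ _), by omega, by omega⟩
  intro K' hK'
  apply hmV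
  intro j hj
  have := hql j (hK' j (by omega)).le
  rw [hEL j (by omega)] at this
  exact this.trans (ENNReal.ofReal_le_ofReal (min_le_left _ _))

/-- The initial position. -/
def root : Pos X := ⟨0, 0, fun _ => 0, fun _ => ⊥, 1, one_pos, by simp, by simp⟩

theorem main [CompactSpace X] (hdense : ∀ x : X, Filter.NeBot (𝓝[≠] x)) (F : Set (Set X)) :
    {K : ℕ → Closeds X | (⋃ n, (K n : Set X)) ∈ F} ∈ residual (ℕ → Closeds X) ↔
    {K : {K : ℕ → Closeds X // Monotone K} | (⋃ n, ((K : ℕ → Closeds X) n : Set X)) ∈ F} ∈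
      residual {K : ℕ → Closeds X // Monotone K} := by
  have := compact_mono (X := X)
  have hpos : ∀ n : ℕ, (0:ℝ) < 1 / ((n:ℝ) + 1) := fun n => Nat.one_div_pos_of_nat
  have hlim : ∀ s : ℕ → Pos X, (∀ n, (s (n+1)).e ≤ 1 / ((n:ℝ)+1)) →
      Filter.Tendsto (fun n => (s n).e) Filter.atTop (𝓝 0) := by
    intro s hs
    rw [← Filter.tendsto_add_atTop_iff_nat 1]
    exact squeeze_zero (fun n => (s (n+1)).e_pos.le) hs tendsto_one_div_add_atTop_nhds_zero_nat
  constructor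
  · intro h
    obtain ⟨t, ht, hG, hD⟩ := mem_residual.1 h
    obtain ⟨D, hDo, rfl⟩ := isGδ_iff_eq_iInter_nat.1 hG
    refine residual_of_positions Pos.WL Pos.isOpen_WL
      (fun n p q => Pos.Ref p q ∧ q.e ≤ 1 / ((n:ℝ)+1) ∧ n ≤ q.N ∧ n ≤ q.M ∧ q.WK ⊆ D n)
      root (by simp [root, Pos.WL]) ?_ ?_ _ ?_
    · intro n p V hV hne hVp
      obtain ⟨q, hq, hqV, -⟩ := moveL hdense p V hV hne hVp n 1 one_pos
      obtain ⟨q', hq', hqV', a, b, c⟩ := moveK hdense q (q.WK ∩ D n) (q.isOpen_WK.inter (hDo n))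
        ((hD.mono (Set.iInter_subset _ n)).inter_open_nonempty _ q.isOpen_WK q.WK_nonempty)
        Set.inter_subset_left n _ (hpos n)
      exact ⟨q', ⟨hq.trans hq', a, b, c, hqV'.trans Set.inter_subset_right⟩,
        subset_closure.trans (hq'.closure_WL.trans hqV), q'.WL_nonempty⟩
    · intro n p q h
      exact subset_closure.trans h.1.closure_WL
    · intro s hs L hL
      obtain ⟨K, hK⟩ := exists_chain (fun n => (s n).WK) (fun n => (s n).WK_nonempty)
        (fun n => (hs n).1.closure_WK)
      have hu := iUnion_eq s (fun n => (hs n).1) (hlim s fun n => (hs n).2.1)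
        (fun n => (hs n).2.2.1) (fun n => (hs n).2.2.2.1) K L hK hL
      have : (⋃ n, (K n : Set X)) ∈ F :=
        ht (Set.mem_iInter.2 fun n => (hs n).2.2.2.2 (hK (n+1)))
      rw [hu] at this
      exact this
  · intro h
    obtain ⟨t, ht, hG, hD⟩ := mem_residual.1 h
    obtain ⟨D, hDo, rfl⟩ := isGδ_iff_eq_iInter_nat.1 hG
    refine residual_of_positions Pos.WK Pos.isOpen_WK
      (fun n p q => Pos.Ref p q ∧ q.e ≤ 1 / ((n:ℝ)+1) ∧ n ≤ q.N ∧ n ≤ q.M ∧ q.WL ⊆ D n)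
      root (by simp [root, Pos.WK]) ?_ ?_ _ ?_
    · intro n p V hV hne hVp
      obtain ⟨q, hq, hqV, -⟩ := moveK hdense p V hV hne hVp n 1 one_pos
      obtain ⟨q', hq', hqV', a, b, c⟩ := moveL hdense q (q.WL ∩ D n) (q.isOpen_WL.inter (hDo n))
        ((hD.mono (Set.iInter_subset _ n)).inter_open_nonempty _ q.isOpen_WL q.WL_nonempty)
        Set.inter_subset_left n _ (hpos n)
      exact ⟨q', ⟨hq.trans hq', a, b, c, hqV'.trans Set.inter_subset_right⟩,
        subset_closure.trans (hq'.closure_WK.trans hqV), q'.WK_nonempty⟩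
    · intro n p q h
      exact subset_closure.trans h.1.closure_WK
    · intro s hs K hK
      obtain ⟨L, hL⟩ := exists_chain (fun n => (s n).WL) (fun n => (s n).WL_nonempty)
        (fun n => (hs n).1.closure_WL)
      have hu := iUnion_eq s (fun n => (hs n).1) (hlim s fun n => (hs n).2.1)
        (fun n => (hs n).2.2.1) (fun n => (hs n).2.2.2.1) K L hK hL
      have : (⋃ n, (L.1 n : Set X)) ∈ F :=
        ht (Set.mem_iInter.2 fun n => (hs n).2.2.2.2 (hL (n+1)))
      rw [← hu] at this
      exact this

end KRes


/-- **Main theorem.** Let `(X, ρ)` be a nonempty compact metric space without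
isolated points, with `ρ(x,y) ≤ 1` for all `x, y`. A family `𝓕` of `F_σ` subsets of `X` is
`𝒦^ℕ`-residual if and only if it is `𝒦↗^ℕ`-residual: the set
`𝒦_𝓕^ℕ = {(Kₙ) ∈ 𝒦^ℕ : ⋃ₙ Kₙ ∈ 𝓕}` is residual in `𝒦^ℕ` if and only if
`𝒦_𝓕^ℕ ∩ 𝒦↗^ℕ` is residual in the subspace `𝒦↗^ℕ` of increasing sequences. -/
theorem stmt_0 (X : Type*) [MetricSpace X] [CompactSpace X] [Nonempty X]
    (hdense : ∀ x : X, Filter.NeBot (𝓝[≠] x))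
    (hbound : ∀ x y : X, dist x y ≤ 1)
    (F : Set (Set X))
    (hF : ∀ A ∈ F, ∃ C : ℕ → Set X, (∀ n, IsClosed (C n)) ∧ A = ⋃ n, C n) :
    {K : ℕ → Closeds X | (⋃ n, (K n : Set X)) ∈ F} ∈ residual (ℕ → Closeds X) ↔
    {K : {K : ℕ → Closeds X // Monotone K} | (⋃ n, ((K : ℕ → Closeds X) n : Set X)) ∈ F} ∈
      residual {K : ℕ → Closeds X // Monotone K} := 
  KRes.main hdense F
end

section
/- A typical F_σ subset of the interval [0,1] is Lebesgue null: the set of all sequences (K_n) of closed subsets of [0,1] such that ⋃_{n=1}^∞ K_n has Lebesgue measure zero is residual in 𝒦([0,1])^ℕ. -/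
open TopologicalSpace MeasureTheory

theorem isOpen_compacts_lt (ε : ENNReal) :
    IsOpen {C : Compacts ↥(Set.Icc (0:ℝ) 1) | volume (C : Set ↥(Set.Icc (0:ℝ) 1)) < ε} := by
  rw [isOpen_iff_mem_nhds]
  intro C hC
  obtain ⟨U, hCU, hU, hlt⟩ := Set.exists_isOpen_lt_of_lt _ _ hC
  filter_upwards [(Compacts.isOpen_subsets_of_isOpen hU).mem_nhds hCU] with D hD
  exact (measure_mono hD).trans_lt hlt

theorem volume_finite_Icc {s : Set ↥(Set.Icc (0:ℝ) 1)} (hs : s.Finite) : volume s = 0 := by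
  rw [Measure.Subtype.volume_def, comap_subtype_coe_apply measurableSet_Icc]
  exact (hs.image _).measure_zero _

theorem dense_compacts_lt (ε : ENNReal) (hε : 0 < ε) :
    Dense {C : Compacts ↥(Set.Icc (0:ℝ) 1) | volume (C : Set ↥(Set.Icc (0:ℝ) 1)) < ε} := by
  refine Compacts.dense_setOfPred_finite.mono ?_
  intro C hC
  have h : volume (C : Set ↥(Set.Icc (0:ℝ) 1)) = 0 := volume_finite_Icc hC
  exact h.trans_lt hε

theorem residual_closeds_null :
    {C : Closeds ↥(Set.Icc (0:ℝ) 1) | volume (C : Set ↥(Set.Icc (0:ℝ) 1)) = 0} ∈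
      residual (Closeds ↥(Set.Icc (0:ℝ) 1)) := by
  have hsurj : Function.Surjective (Compacts.toCloseds (α := ↥(Set.Icc (0:ℝ) 1))) :=
    fun C => ⟨⟨C, C.isClosed.isCompact⟩, rfl⟩
  have hopen : IsOpenMap (Compacts.toCloseds (α := ↥(Set.Icc (0:ℝ) 1))) :=
    (Compacts.isEmbedding_toCloseds.isOpenEmbedding_of_surjective hsurj).isOpenMap
  have key : ∀ k : ℕ, ∀ᶠ C : Closeds ↥(Set.Icc (0:ℝ) 1) in residual (Closeds ↥(Set.Icc (0:ℝ) 1)),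
      volume (C : Set ↥(Set.Icc (0:ℝ) 1)) < ((k : ENNReal) + 1)⁻¹ := by
    intro k
    have hε : 0 < ((k : ENNReal) + 1)⁻¹ := by simp
    refine Filter.mem_of_superset (residual_of_dense_open
      (hopen _ (isOpen_compacts_lt ((k : ENNReal) + 1)⁻¹))
      (hsurj.denseRange.dense_image Compacts.continuous_toCloseds (dense_compacts_lt _ hε))) ?_
    rintro _ ⟨C, hC, rfl⟩
    exact hC
  filter_upwards [eventually_countable_forall.2 key] with C hC
  by_contra hne
  obtain ⟨n, hn⟩ := ENNReal.exists_inv_nat_lt hne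
  refine absurd (hC n) (not_lt.2 (le_trans ?_ hn.le))
  exact ENNReal.inv_le_inv.2 le_self_add

/-- A typical `F_σ` subset of the interval `[0,1]` is Lebesgue null:
the set of all sequences `(Kₙ)` of closed subsets of `[0,1]` such that `⋃ₙ Kₙ` has
Lebesgue measure zero is residual in `𝒦([0,1])^ℕ`. -/
theorem stmt_5 :
    {K : ℕ → Closeds ↥(Set.Icc (0:ℝ) 1) |
        volume (⋃ n, (K n : Set ↥(Set.Icc (0:ℝ) 1))) = 0} ∈
      residual (ℕ → Closeds ↥(Set.Icc (0:ℝ) 1)) := by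
  have key : ∀ n : ℕ, ∀ᶠ K in residual (ℕ → Closeds ↥(Set.Icc (0:ℝ) 1)),
      volume (K n : Set ↥(Set.Icc (0:ℝ) 1)) = 0 := fun n =>
    (tendsto_residual_of_isOpenMap
      (f := fun K : ℕ → Closeds ↥(Set.Icc (0:ℝ) 1) => K n)
      (continuous_apply n) (isOpenMap_eval n)).eventually residual_closeds_null
  filter_upwards [eventually_countable_forall.2 key] with K hK
  exact measure_iUnion_null hK
end
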